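/- arXiv:0806.2561 — 2 statements merged into one kernel-verified Lean document; each statement's English description precedes it below -/
import Mathlib

section
/- If (V, x1*, x2*, x3*, x4*) is a solution of the free boundary problem (2.18)–(2.21) with V not identically 0 on (x1*, x2*) and V not identically 0 on (x3*, x4*), then it is the unique solution with this property, and moreover x1* < x_{1,ℓ}, x2* and x3* lie in (x_{2,r}, x_{3,ℓ}), and x4* > x_{4,r}. -/
/-!
With the integrating factor `p = exp (∫ 2b/σ²)` and the flux `u = p V'`, the equation becomes the
first-order system `V' = u/p`, `u' = r V + h`, where `r = 2λp/σ² ≥ 0` and `h = -2fp/σ²` has the sign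
opposite to `f` (`sys_of_ode`). The system is cooperative: nonnegative data and a nonnegative `h`
keep `V` and `u` nonnegative and growing (`Sys.nonneg`, `Sys.growth`, `Sys.strict`), and the
reflection `x ↦ -x` gives the backward counterparts.

*Location.* If `f` changes sign at most once on an interval, a solution with `V = V' = 0` at both
ends is zero (`Sys.vanish`): forward monotonicity up to the sign change `c` and backward
monotonicity down to it give `V c ≥ 0` and `V c ≤ 0` (or the reverse), hence `V c = 0` and `V = 0`.
So each of the two intervals meets at least three of the five regions in the sign pattern
`- + - + -` of `f`, and `x₂ ≤ x₃` leaves only the asserted configuration (`location`).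

*Uniqueness.* On each interval `f < 0` near both ends. If two solutions `V`, `W` had left endpoints
`α < α'`, then `V - W` would solve the homogeneous system with positive data at `α'`, hence would
stay positive with positive flux up to the smaller right endpoint. There, however, either
`V = 0 ≤ W`, or `W` has zero flux while `V` has negative flux. Hence `α = α'`, the solutions agree
on the common interval, and `V > 0` immediately to the left of a right endpoint makes the right
endpoints equal (`Sys.unique`).
-/

open MeasureTheory Set Filter

noncomputable section

def LocBddAt (F : ℝ → ℝ) (x : ℝ) : Prop :=
  ∃ ε > 0, ∃ C : ℝ, ∀ y ∈ Set.Ioo (x - ε) (x + ε), |F y| ≤ C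

/-- Engelbert–Schmidt condition (2.2) together with Borel measurability -/
def ES (b σ : ℝ → ℝ) : Prop :=
  Measurable b ∧ Measurable σ ∧ (∀ x, σ x ≠ 0) ∧
  LocallyIntegrable (fun x => 1 / (σ x) ^ 2) volume ∧
  LocallyIntegrable (fun x => b x / (σ x) ^ 2) volume

/-- shape of `f` with two favorable regions: `f = 0` on the four segments
`[a1l, a1r], [a2l, a2r], [a3l, a3r], [a4l, a4r]`, `f > 0` on
`(a1r, a2l) ∪ (a3r, a4l)` and `f < 0` on the rest of `ℝ`. -/
def Shape4 (f : ℝ → ℝ) (a1l a1r a2l a2r a3l a3r a4l a4r : ℝ) : Prop :=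
  a1l ≤ a1r ∧ a1r < a2l ∧ a2l ≤ a2r ∧ a2r < a3l ∧ a3l ≤ a3r ∧ a3r < a4l ∧ a4l ≤ a4r ∧
  (∀ x ∈ Set.Icc a1l a1r ∪ Set.Icc a2l a2r ∪ Set.Icc a3l a3r ∪ Set.Icc a4l a4r, f x = 0) ∧
  (∀ x ∈ Set.Ioo a1r a2l ∪ Set.Ioo a3r a4l, 0 < f x) ∧
  (∀ x ∈ Set.Iio a1l ∪ Set.Ioo a2r a3l ∪ Set.Ioi a4r, f x < 0)

/-- the analogue of condition (2.3) for `Shape4` -/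
def Cond23' (f σ : ℝ → ℝ) (a1l a1r a2l a2r a3l a3r a4l a4r : ℝ) : Prop :=
  LocallyIntegrable (fun x => f x / (σ x) ^ 2) volume ∧
  ∀ x ∉ Set.Icc a1l a1r ∪ Set.Icc a2l a2r ∪ Set.Icc a3l a3r ∪ Set.Icc a4l a4r,
    LocBddAt (fun y => 1 / f y) x

/-- classical ε-δ absolute continuity of `F` on `[a,b]` -/
def AbsCont (F : ℝ → ℝ) (a b : ℝ) : Prop :=
  ∀ ε > 0, ∃ δ > 0, ∀ n : ℕ, ∀ s t : Fin n → ℝ,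
    (∀ i, a ≤ s i ∧ s i ≤ t i ∧ t i ≤ b) →
    (Pairwise fun i j => Disjoint (Set.Ioo (s i) (t i)) (Set.Ioo (s j) (t j))) →
    (∑ i, (t i - s i)) < δ → (∑ i, |F (t i) - F (s i)|) < ε

/-- a solution of the free boundary problem (2.18)–(2.21) -/
def SolFBP1821 (b σ f : ℝ → ℝ) (lam : ℝ) (V : ℝ → ℝ) (x1 x2 x3 x4 : ℝ) : Prop :=
  x1 < x2 ∧ x2 ≤ x3 ∧ x3 < x4 ∧
  (∀ x ∉ Set.Ioo x1 x2 ∪ Set.Ioo x3 x4, V x = 0) ∧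
  ∃ V' : ℝ → ℝ,
    (∀ x ∈ Set.Icc x1 x2, HasDerivWithinAt V (V' x) (Set.Icc x1 x2) x) ∧
    (∀ x ∈ Set.Icc x3 x4, HasDerivWithinAt V (V' x) (Set.Icc x3 x4) x) ∧
    ContinuousOn V' (Set.Icc x1 x2) ∧ ContinuousOn V' (Set.Icc x3 x4) ∧
    V' x1 = 0 ∧ V' x2 = 0 ∧ V' x3 = 0 ∧ V' x4 = 0 ∧
    AbsCont V' x1 x2 ∧ AbsCont V' x3 x4 ∧
    ∀ᵐ x, x ∈ Set.Ioo x1 x2 ∪ Set.Ioo x3 x4 → ∃ d, HasDerivAt V' d x ∧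
      (σ x) ^ 2 / 2 * d + b x * V' x - lam * V x = -f x

/-! ### Absolute continuity -/

/-- The `ε`-`δ` notion `AbsCont` (open intervals, ordered endpoints, indexed by `Fin n`) implies
Mathlib's filter-based notion. -/
lemma AbsCont.toMathlib {F : ℝ → ℝ} {a b : ℝ} (hab : a ≤ b) (hF : AbsCont F a b) :
    AbsolutelyContinuousOnInterval F a b := by
  rw [absolutelyContinuousOnInterval_iff]
  intro ε hε
  obtain ⟨δ, hδ, H⟩ := hF ε hε
  refine ⟨δ, hδ, ?_⟩
  rintro ⟨n, I⟩ ⟨h1, h2⟩ h3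
  simp only [uIcc_of_le hab] at h1 h2 h3 ⊢
  have key := H n (fun i => min (I i).1 (I i).2) (fun i => max (I i).1 (I i).2) ?_ ?_ ?_
  · rw [Finset.sum_range]
    convert key using 2 with i
    rcases le_total (I i).1 (I i).2 with h | h
    · simp only [min_eq_left h, max_eq_right h, Real.dist_eq]
      rw [abs_sub_comm]
    · simp only [min_eq_right h, max_eq_left h, Real.dist_eq]
  · intro i
    obtain ⟨⟨p1, p2⟩, q1, q2⟩ := h1 i (by simp)
    exact ⟨le_min p1 q1, min_le_max, max_le p2 q2⟩
  · intro i j hij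
    have := h2 (x := (i : ℕ)) (by simp) (y := (j : ℕ)) (by simp) (by simpa [Fin.ext_iff] using hij)
    exact this.mono Ioo_subset_Ioc_self Ioo_subset_Ioc_self
  · rw [Finset.sum_range] at h3
    convert h3 using 2 with i
    rw [Real.dist_eq, max_sub_min_eq_abs, abs_sub_comm]

lemma AbsolutelyContinuousOnInterval.lipschitz_comp {F φ : ℝ → ℝ} {a b : ℝ} {s : Set ℝ}
    {K : NNReal} (hF : AbsolutelyContinuousOnInterval F a b) (hφ : LipschitzOnWith K φ s)
    (hs : MapsTo F (uIcc a b) s) :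
    AbsolutelyContinuousOnInterval (fun x => φ (F x)) a b := by
  rw [absolutelyContinuousOnInterval_iff] at hF ⊢
  intro ε hε
  obtain ⟨δ, hδ, H⟩ := hF (ε / (K + 1)) (by positivity)
  refine ⟨δ, hδ, fun E hE hEδ => ?_⟩
  have h1 := H E hE hEδ
  rw [lt_div_iff₀ (by positivity)] at h1
  refine lt_of_le_of_lt ?_ h1
  rw [Finset.sum_mul]
  refine Finset.sum_le_sum fun i hi => ?_
  have h2 := hφ.dist_le_mul _ (hs (hE.1 i hi).1) _ (hs (hE.1 i hi).2)
  have h3 : (0 : ℝ) ≤ dist (F (E.2 i).1) (F (E.2 i).2) := dist_nonneg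
  linarith

lemma locInt_intervalIntegrable {w : ℝ → ℝ} (hw : LocallyIntegrable w volume) (a b : ℝ) :
    IntervalIntegrable w volume a b :=
  intervalIntegrable_iff.mpr
    ((hw.integrableOn_isCompact isCompact_uIcc).mono_set uIoc_subset_uIcc)

/-- The integrating factor `x ↦ exp (∫_c^x w)`. -/
def expInt (w : ℝ → ℝ) (c x : ℝ) : ℝ := Real.exp (∫ t in c..x, w t)

lemma expInt_pos (w : ℝ → ℝ) (c x : ℝ) : 0 < expInt w c x := Real.exp_pos _

lemma expInt_continuous {w : ℝ → ℝ} (hw : LocallyIntegrable w volume) (c : ℝ) :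
    Continuous (expInt w c) :=
  Real.continuous_exp.comp
    (intervalIntegral.continuous_primitive (fun a b => locInt_intervalIntegrable hw a b) c)

lemma expInt_ac {w : ℝ → ℝ} (hw : LocallyIntegrable w volume) (c a b : ℝ) :
    AbsolutelyContinuousOnInterval (expInt w c) a b := by
  have h0 : AbsolutelyContinuousOnInterval (fun x => ∫ t in c..x, w t)
      (min c (min a b)) (max c (max a b)) := by
    refine (locInt_intervalIntegrable hw _ _).absolutelyContinuousOnInterval_intervalIntegral ?_
    rw [uIcc_of_le (by simp)]
    exact ⟨min_le_left _ _, le_max_left _ _⟩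
  have h1 := h0.mono (c := a) (d := b) (by
    rw [uIcc_of_le (a := min c _) (by simp)]
    exact Icc_subset_Icc (min_le_right _ _) (le_max_right _ _))
  obtain ⟨C, hC⟩ := h1.exists_bound
  obtain ⟨K, hK⟩ := (Real.contDiff_exp (n := 1)).contDiffOn.exists_lipschitzOnWith
    (s := Icc (-C) C) (by decide) (convex_Icc _ _) isCompact_Icc
  exact h1.lipschitz_comp hK fun x hx => abs_le.mp (hC x hx)

lemma expInt_ae_hasDerivAt {w : ℝ → ℝ} (hw : LocallyIntegrable w volume) (c : ℝ) :
    ∀ᵐ x, HasDerivAt (expInt w c) (w x * expInt w c x) x := by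
  filter_upwards [_root_.LocallyIntegrable.ae_hasDerivAt_integral hw] with x hx
  have := (hx c).exp
  rwa [mul_comm] at this

lemma integral_expInt {w : ℝ → ℝ} (hw : LocallyIntegrable w volume) (a x : ℝ) :
    ∫ t in a..x, w t * expInt w a t = expInt w a x - 1 := by
  have h1 := (expInt_ac hw a a x).integral_deriv_eq_sub
  have h2 : expInt w a a = 1 := by simp [expInt]
  rw [h2] at h1
  rw [← h1]
  refine intervalIntegral.integral_congr_ae ?_
  filter_upwards [expInt_ae_hasDerivAt hw a] with t ht _
  exact ht.deriv.symm

/-! ### The first-order system -/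

/-- Integrated form, on `[a, b]`, of the system `V' = k u`, `u' = r V + h`. -/
structure Sys (k r h V u : ℝ → ℝ) (a b : ℝ) : Prop where
  contV : ContinuousOn V (Icc a b)
  contU : ContinuousOn u (Icc a b)
  intV : ∀ x ∈ Icc a b, ∀ y ∈ Icc a b, V y - V x = ∫ t in x..y, k t * u t
  intU : ∀ x ∈ Icc a b, ∀ y ∈ Icc a b, u y - u x = ∫ t in x..y, (r t * V t + h t)

/-- The coefficients of the system are admissible: `k` is continuous and positive, and `r` is
locally integrable and nonnegative. -/
structure Coef (k r : ℝ → ℝ) : Prop where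
  cont : Continuous k
  pos : ∀ x, 0 < k x
  locInt : LocallyIntegrable r volume
  nonneg : ∀ x, 0 ≤ r x

namespace Sys

variable {k r h V u : ℝ → ℝ} {a b : ℝ}

lemma mono (S : Sys k r h V u a b) {c d : ℝ} (hc : a ≤ c) (hd : d ≤ b) :
    Sys k r h V u c d where
  contV := S.contV.mono (Icc_subset_Icc hc hd)
  contU := S.contU.mono (Icc_subset_Icc hc hd)
  intV x hx y hy := S.intV x (Icc_subset_Icc hc hd hx) y (Icc_subset_Icc hc hd hy)
  intU x hx y hy := S.intU x (Icc_subset_Icc hc hd hx) y (Icc_subset_Icc hc hd hy)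

lemma integrable_ku (hc : Coef k r) (S : Sys k r h V u a b) {x y : ℝ}
    (hx : x ∈ Icc a b) (hy : y ∈ Icc a b) :
    IntervalIntegrable (fun t => k t * u t) volume x y :=
  ((hc.cont.continuousOn.mul S.contU).mono (uIcc_subset_Icc hx hy)).intervalIntegrable

lemma integrable_rV (hc : Coef k r) (S : Sys k r h V u a b) {x y : ℝ}
    (hx : x ∈ Icc a b) (hy : y ∈ Icc a b) :
    IntervalIntegrable (fun t => r t * V t) volume x y :=
  (locInt_intervalIntegrable hc.locInt x y).mul_continuousOn
    (S.contV.mono (uIcc_subset_Icc hx hy))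

lemma neg (S : Sys k r h V u a b) :
    Sys k r (fun x => -h x) (fun x => -V x) (fun x => -u x) a b where
  contV := S.contV.neg
  contU := S.contU.neg
  intV x hx y hy := by
    have := S.intV x hx y hy
    simp only [mul_neg, intervalIntegral.integral_neg]
    linarith
  intU x hx y hy := by
    have := S.intU x hx y hy
    have e : (fun t => r t * -V t + -h t) = fun t => -(r t * V t + h t) := by
      funext t; ring
    rw [e, intervalIntegral.integral_neg]
    linarith

/-- The difference of two solutions solves the homogeneous system. -/
lemma sub (hc : Coef k r) (hh : LocallyIntegrable h volume) (S : Sys k r h V u a b)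
    {W v : ℝ → ℝ} (T : Sys k r h W v a b) :
    Sys k r (fun _ => 0) (fun x => V x - W x) (fun x => u x - v x) a b where
  contV := S.contV.sub T.contV
  contU := S.contU.sub T.contU
  intV x hx y hy := by
    have e : (fun t => k t * (u t - v t)) = fun t => k t * u t - k t * v t := by
      funext t; ring
    rw [e, intervalIntegral.integral_sub (S.integrable_ku hc hx hy) (T.integrable_ku hc hx hy),
      ← S.intV x hx y hy, ← T.intV x hx y hy]
    ring
  intU x hx y hy := by
    have e : (fun t => r t * (V t - W t) + 0) =
        fun t => (r t * V t + h t) - (r t * W t + h t) := by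
      funext t; ring
    rw [e, intervalIntegral.integral_sub
      ((S.integrable_rV hc hx hy).add (locInt_intervalIntegrable hh x y))
      ((T.integrable_rV hc hx hy).add (locInt_intervalIntegrable hh x y)),
      ← S.intU x hx y hy, ← T.intU x hx y hy]
    ring

/-- Under `x ↦ -x` the flux `u` changes sign and the form of the system is preserved. -/
lemma reflect (S : Sys k r h V u a b) :
    Sys (fun x => k (-x)) (fun x => r (-x)) (fun x => h (-x)) (fun x => V (-x))
      (fun x => -u (-x)) (-b) (-a) where
  contV := S.contV.comp continuous_neg.continuousOn fun x hx =>
    ⟨by linarith [hx.2], by linarith [hx.1]⟩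
  contU := (S.contU.comp continuous_neg.continuousOn fun x hx =>
    ⟨by linarith [hx.2], by linarith [hx.1]⟩).neg
  intV x hx y hy := by
    have := S.intV (-y) ⟨by linarith [hy.2], by linarith [hy.1]⟩
      (-x) ⟨by linarith [hx.2], by linarith [hx.1]⟩
    simp only [mul_neg, intervalIntegral.integral_neg]
    rw [intervalIntegral.integral_comp_neg (fun t => k t * u t)]
    linarith
  intU x hx y hy := by
    have := S.intU (-y) ⟨by linarith [hy.2], by linarith [hy.1]⟩
      (-x) ⟨by linarith [hx.2], by linarith [hx.1]⟩
    rw [intervalIntegral.integral_comp_neg (fun t => r t * V t + h t)]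
    linarith

/-- Nonnegative data and a nonnegative forcing produce a nonnegative solution. Both unknowns are
compared with `E = exp (∫ (r + k))`: at a negative minimum `m` of `min V u / E` the integral
equations would give `V, u ≥ m (E - 1) > m E`. -/
lemma nonneg (hc : Coef k r) (hh : LocallyIntegrable h volume) (S : Sys k r h V u a b)
    (hab : a ≤ b) (hV : 0 ≤ V a) (hu : 0 ≤ u a) (hpos : ∀ x ∈ Ioo a b, 0 ≤ h x) :
    ∀ x ∈ Icc a b, 0 ≤ V x ∧ 0 ≤ u x := by
  set w : ℝ → ℝ := fun t => r t + k t with hw_def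
  have hw : LocallyIntegrable w volume := hc.locInt.add hc.cont.locallyIntegrable
  set E := expInt w a with hE
  have hEc : Continuous E := expInt_continuous hw a
  have hE0 : ∀ x, 0 < E x := expInt_pos w a
  have hφ : ContinuousOn (fun x => min (V x) (u x) / E x) (Icc a b) :=
    (continuous_min.comp_continuousOn (S.contV.prodMk S.contU)).div hEc.continuousOn
      fun x _ => (hE0 x).ne'
  obtain ⟨z, hz, hmin⟩ := isCompact_Icc.exists_isMinOn (nonempty_Icc.mpr hab) hφ
  set m := min (V z) (u z) / E z with hm
  have hlow : ∀ x ∈ Icc a b, m * E x ≤ min (V x) (u x) := by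
    intro x hx
    have := hmin hx
    exact (le_div_iff₀ (hE0 x)).mp this
  have ha : a ∈ Icc a b := ⟨le_rfl, hab⟩
  by_cases hm0 : 0 ≤ m
  · intro x hx
    have h1 := hlow x hx
    have h2 : 0 ≤ m * E x := mul_nonneg hm0 (hE0 x).le
    exact ⟨(h2.trans h1).trans (min_le_left _ _), (h2.trans h1).trans (min_le_right _ _)⟩
  exfalso
  push Not at hm0
  have hsub : ∀ t ∈ Ioo a z, t ∈ Icc a b := fun t ht => ⟨ht.1.le, ht.2.le.trans hz.2⟩
  have hwE : IntervalIntegrable (fun t => m * (w t * E t)) volume a z :=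
    ((locInt_intervalIntegrable hw a z).mul_continuousOn hEc.continuousOn).const_mul m
  have hI : ∫ t in a..z, m * (w t * E t) = m * (E z - 1) := by
    rw [intervalIntegral.integral_const_mul, integral_expInt hw]
  have hVz : m * (E z - 1) ≤ V z - V a := by
    rw [S.intV a ha z hz, ← hI]
    refine intervalIntegral.integral_mono_on_of_le_Ioo hz.1 hwE (S.integrable_ku hc ha hz) ?_
    intro t ht
    have h1 := (hlow t (hsub t ht)).trans (min_le_right _ _)
    have h2 := mul_le_mul_of_nonneg_left h1 (hc.pos t).le
    have h3 : m * (r t * E t) ≤ 0 :=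
      mul_nonpos_of_nonpos_of_nonneg hm0.le (mul_nonneg (hc.nonneg t) (hE0 t).le)
    simp only [hw_def]
    nlinarith
  have huz : m * (E z - 1) ≤ u z - u a := by
    rw [S.intU a ha z hz, ← hI]
    refine intervalIntegral.integral_mono_on_of_le_Ioo hz.1 hwE
      ((S.integrable_rV hc ha hz).add (locInt_intervalIntegrable hh a z)) ?_
    intro t ht
    have h1 := (hlow t (hsub t ht)).trans (min_le_left _ _)
    have h2 := mul_le_mul_of_nonneg_left h1 (hc.nonneg t)
    have h3 : m * (k t * E t) ≤ 0 :=
      mul_nonpos_of_nonpos_of_nonneg hm0.le (mul_nonneg (hc.pos t).le (hE0 t).le)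
    have h4 := hpos t ⟨ht.1, ht.2.trans_le hz.2⟩
    simp only [hw_def]
    nlinarith
  have hmz : min (V z) (u z) = m * E z := by
    rw [hm, div_mul_cancel₀ _ (hE0 z).ne']
  have : m * E z < min (V z) (u z) := lt_min (by nlinarith) (by nlinarith)
  linarith

/-- Quantitative form of `Sys.nonneg`: `V` does not drop below its initial value and `u` grows at
least by the integral of the forcing. -/
lemma growth (hc : Coef k r) (hh : LocallyIntegrable h volume) (S : Sys k r h V u a b)
    (hab : a ≤ b) (hV : 0 ≤ V a) (hu : 0 ≤ u a) (hpos : ∀ x ∈ Ioo a b, 0 ≤ h x) :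
    ∀ x ∈ Icc a b, V a ≤ V x ∧ u a + ∫ t in a..x, h t ≤ u x := by
  have hn := S.nonneg hc hh hab hV hu hpos
  intro x hx
  have ha : a ∈ Icc a b := ⟨le_rfl, hab⟩
  have hsub : ∀ t ∈ Icc a x, t ∈ Icc a b := fun t ht => ⟨ht.1, ht.2.trans hx.2⟩
  have h1 := S.intV a ha x hx
  have h2 := S.intU a ha x hx
  rw [intervalIntegral.integral_add (S.integrable_rV hc ha hx)
    (locInt_intervalIntegrable hh a x)] at h2
  have h3 : 0 ≤ ∫ t in a..x, k t * u t :=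
    intervalIntegral.integral_nonneg hx.1 fun t ht =>
      mul_nonneg (hc.pos t).le (hn t (hsub t ht)).2
  have h4 : 0 ≤ ∫ t in a..x, r t * V t :=
    intervalIntegral.integral_nonneg hx.1 fun t ht =>
      mul_nonneg (hc.nonneg t) (hn t (hsub t ht)).1
  exact ⟨by linarith, by linarith⟩

lemma strict (hc : Coef k r) (hh : LocallyIntegrable h volume) (S : Sys k r h V u a b)
    (hV : V a = 0) (hu : u a = 0) (hpos : ∀ x ∈ Ioo a b, 0 < h x) :
    ∀ x ∈ Ioc a b, 0 < V x ∧ 0 < u x := by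
  intro x hx
  have hab : a ≤ b := hx.1.le.trans hx.2
  have ha : a ∈ Icc a b := ⟨le_rfl, hab⟩
  have hg := S.growth hc hh hab hV.ge hu.ge fun t ht => (hpos t ht).le
  have hU : ∀ y ∈ Ioc a b, 0 < u y := by
    intro y hy
    have h1 := (hg y ⟨hy.1.le, hy.2⟩).2
    have h2 : 0 < ∫ t in a..y, h t :=
      intervalIntegral.intervalIntegral_pos_of_pos_on (locInt_intervalIntegrable hh a y)
        (fun t ht => hpos t ⟨ht.1, ht.2.trans_le hy.2⟩) hy.1
    linarith
  refine ⟨?_, hU x hx⟩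
  have h1 := S.intV a ha x ⟨hx.1.le, hx.2⟩
  have h2 : 0 < ∫ t in a..x, k t * u t :=
    intervalIntegral.intervalIntegral_pos_of_pos_on
      (S.integrable_ku hc ha ⟨hx.1.le, hx.2⟩)
      (fun t ht => mul_pos (hc.pos t) (hU t ⟨ht.1, ht.2.le.trans hx.2⟩)) hx.1
  linarith

end Sys

lemma locInt_comp_neg {w : ℝ → ℝ} (hw : LocallyIntegrable w volume) :
    LocallyIntegrable (fun x => w (-x)) volume := by
  have h := (locallyIntegrable_map_homeomorph (Homeomorph.neg ℝ) (f := w) (μ := volume)).mp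
  refine h ?_
  have e : Measure.map (Homeomorph.neg ℝ) (volume : Measure ℝ) = volume :=
    (Measure.measurePreserving_neg (volume : Measure ℝ)).map_eq
  rwa [e]

lemma Coef.reflect {k r : ℝ → ℝ} (hc : Coef k r) :
    Coef (fun x => k (-x)) (fun x => r (-x)) where
  cont := hc.cont.comp continuous_neg
  pos _ := hc.pos _
  locInt := locInt_comp_neg hc.locInt
  nonneg _ := hc.nonneg _

namespace Sys

variable {α β α' β' a b : ℝ} {k r h V u W v : ℝ → ℝ}

/-- Backward version of `Sys.strict`, from zero data at the right endpoint. -/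
lemma strict_left (hc : Coef k r) (hh : LocallyIntegrable h volume) (S : Sys k r h V u a b)
    (hV : V b = 0) (hu : u b = 0) (hpos : ∀ x ∈ Ioo a b, 0 < h x) :
    ∀ x ∈ Ico a b, 0 < V x ∧ u x < 0 := by
  intro x hx
  have h1 := S.reflect.strict hc.reflect (locInt_comp_neg hh) (by simpa using hV)
    (by simpa using hu) (fun t ht => hpos _ ⟨by linarith [ht.2], by linarith [ht.1]⟩) (-x)
    ⟨by linarith [hx.2], by linarith [hx.1]⟩
  simp only [neg_neg] at h1
  exact ⟨h1.1, by linarith [h1.2]⟩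

/-- A solution with zero data at both endpoints vanishes if the forcing changes sign only once,
from `+` to `-`: `V` is nonnegative and increasing to the left of the sign change `c`, nonpositive
and increasing to its right, so `V c = 0` forces `V = 0` on both sides. -/
lemma vanish (hc : Coef k r) (hh : LocallyIntegrable h volume) (S : Sys k r h V u a b)
    (hVa : V a = 0) (hua : u a = 0) (hVb : V b = 0) (hub : u b = 0) {c : ℝ} (hcm : c ∈ Icc a b)
    (hl : ∀ x ∈ Ioo a c, 0 ≤ h x) (hr : ∀ x ∈ Ioo c b, h x ≤ 0) :
    ∀ x ∈ Icc a b, V x = 0 := by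
  have S1 := S.mono le_rfl hcm.2
  have S2 := (S.mono hcm.1 le_rfl).neg.reflect
  have hh2 := locInt_comp_neg hh.neg
  have hr2 : ∀ x ∈ Ioo (-b) (-c), 0 ≤ -h (-x) := fun x hx => by
    linarith [hr (-x) ⟨by linarith [hx.2], by linarith [hx.1]⟩]
  have n1 := S1.nonneg hc hh hcm.1 hVa.ge hua.ge hl
  have n2 := S2.nonneg hc.reflect hh2 (by linarith [hcm.2]) (by simp [hVb]) (by simp [hub]) hr2
  have n1c := (n1 c ⟨hcm.1, le_rfl⟩).1
  have n2c := (n2 (-c) ⟨by linarith [hcm.2], le_rfl⟩).1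
  simp only [neg_neg] at n2c
  intro x hx
  rcases le_total x c with hxc | hxc
  · have hx0 := n1 x ⟨hx.1, hxc⟩
    have := ((S1.mono hx.1 le_rfl).growth hc hh hxc hx0.1 hx0.2
      (fun t ht => hl t ⟨hx.1.trans_lt ht.1, ht.2⟩) c ⟨hxc, le_rfl⟩).1
    linarith [hx0.1]
  · have hx0 := n2 (-x) ⟨by linarith [hx.2], by linarith⟩
    have := ((S2.mono (c := -x) (by linarith [hx.2]) le_rfl).growth hc.reflect hh2
      (by linarith) hx0.1 hx0.2
      (fun t ht => hr2 t ⟨by linarith [hx.2, ht.1], ht.2⟩) (-c) ⟨by linarith, le_rfl⟩).1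
    simp only [neg_neg] at this hx0
    linarith [hx0.1]

/-- Of two solutions with zero data at both ends of their intervals, the first cannot start strictly
to the left of the second, provided the forcing is positive near all four endpoints. If `α < α'`, the difference `V - W` has
positive data at `α'` and keeps growing up to the smaller right endpoint, where the backward
estimates for `V` or `W` contradict this. -/
lemma left_endpoint_not_lt (hc : Coef k r) (hh : LocallyIntegrable h volume) {L a c R : ℝ}
    (S : Sys k r h V u α β) (T : Sys k r h W v α' β')
    (hVα : V α = 0) (huα : u α = 0) (hVβ : V β = 0) (huβ : u β = 0)
    (hWα : W α' = 0) (hvα : v α' = 0) (hWβ : W β' = 0) (hvβ : v β' = 0)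
    (hLα : L ≤ α) (hαa : α' < a) (hac : a ≤ c) (hcβ : c < β) (hcβ' : c < β')
    (hβR : β ≤ R) (hβR' : β' ≤ R)
    (hl : ∀ x ∈ Ioo L a, 0 < h x) (hr : ∀ x ∈ Ioo c R, 0 < h x) : ¬ α < α' := by
  intro hlt
  have s1 := (S.mono (c := α) (d := α') le_rfl (by linarith)).strict hc hh hVα huα
    (fun x hx => hl x ⟨hLα.trans_lt hx.1, hx.2.trans hαa⟩) α' ⟨hlt, le_rfl⟩
  have hz : LocallyIntegrable (fun _ : ℝ => (0 : ℝ)) volume := continuous_const.locallyIntegrable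
  have hγ : α' ≤ min β β' := le_min (by linarith) (by linarith)
  have D := (S.mono hlt.le (min_le_left β β')).sub hc hh (T.mono le_rfl (min_le_right β β'))
  have g := D.growth hc hz hγ (by linarith [s1.1]) (by linarith [s1.2]) (fun _ _ => le_rfl)
    (min β β') ⟨hγ, le_rfl⟩
  simp only [intervalIntegral.integral_zero, hWα, hvα] at g
  rcases lt_trichotomy β β' with hb | hb | hb
  · have s2 := (T.mono (c := β) (by linarith) le_rfl).strict_left hc hh hWβ hvβ
      (fun x hx => hr x ⟨hcβ.trans hx.1, hx.2.trans_le hβR'⟩) β ⟨le_rfl, hb⟩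
    rw [min_eq_left hb.le] at g
    linarith [g.1, s1.1, s2.1]
  · rw [hb, min_self, ← hb, hVβ, hb, hWβ] at g
    linarith [g.1, s1.1]
  · have s2 := (S.mono (c := β') (by linarith) le_rfl).strict_left hc hh hVβ huβ
      (fun x hx => hr x ⟨hcβ'.trans hx.1, hx.2.trans_le hβR⟩) β' ⟨le_rfl, hb⟩
    rw [min_eq_right hb.le] at g
    linarith [g.2, s1.2, s2.2]

/-- Solutions with equal data at the left endpoint agree. -/
lemma eq_of_eq_left (hc : Coef k r) (hh : LocallyIntegrable h volume)
    (S : Sys k r h V u a b) (T : Sys k r h W v a b) (hab : a ≤ b)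
    (hV : V a = W a) (hu : u a = v a) : ∀ x ∈ Icc a b, V x = W x := by
  have hz : LocallyIntegrable (fun _ : ℝ => (0 : ℝ)) volume := continuous_const.locallyIntegrable
  intro x hx
  have h1 := ((S.sub hc hh T).nonneg hc hz hab (by simp [hV]) (by simp [hu])
    (fun _ _ => le_rfl) x hx).1
  have h2 := ((T.sub hc hh S).nonneg hc hz hab (by simp [hV]) (by simp [hu])
    (fun _ _ => le_rfl) x hx).1
  linarith

/-- Uniqueness for the one-interval free boundary problem whose forcing is positive near the
endpoints. -/
lemma unique (hc : Coef k r) (hh : LocallyIntegrable h volume) {L a c R : ℝ}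
    (S : Sys k r h V u α β) (T : Sys k r h W v α' β')
    (hVα : V α = 0) (huα : u α = 0) (hVβ : V β = 0) (huβ : u β = 0)
    (hWα : W α' = 0) (hvα : v α' = 0) (hWβ : W β' = 0) (hvβ : v β' = 0)
    (hLα : L ≤ α) (hLα' : L ≤ α') (hαa : α < a) (hαa' : α' < a) (hac : a ≤ c)
    (hcβ : c < β) (hcβ' : c < β') (hβR : β ≤ R) (hβR' : β' ≤ R)
    (hl : ∀ x ∈ Ioo L a, 0 < h x) (hr : ∀ x ∈ Ioo c R, 0 < h x) :
    α' = α ∧ β' = β ∧ ∀ x ∈ Icc α β, W x = V x := by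
  have hα : α' = α := le_antisymm
    (not_lt.mp (S.left_endpoint_not_lt hc hh T hVα huα hVβ huβ hWα hvα hWβ hvβ hLα hαa' hac
      hcβ hcβ' hβR hβR' hl hr))
    (not_lt.mp (T.left_endpoint_not_lt hc hh S hWα hvα hWβ hvβ hVα huα hVβ huβ hLα' hαa hac
      hcβ' hcβ hβR' hβR hl hr))
  subst hα
  have hβ : β' = β := by
    rcases lt_trichotomy β β' with hb | hb | hb
    · have e := S.eq_of_eq_left hc hh (T.mono le_rfl hb.le) (by linarith) (by rw [hVα, hWα])
        (by rw [huα, hvα]) β ⟨by linarith, le_rfl⟩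
      have s2 := (T.mono (c := β) (by linarith) le_rfl).strict_left hc hh hWβ hvβ
        (fun x hx => hr x ⟨hcβ.trans hx.1, hx.2.trans_le hβR'⟩) β ⟨le_rfl, hb⟩
      linarith [s2.1]
    · exact hb.symm
    · have e := T.eq_of_eq_left hc hh (S.mono le_rfl hb.le) (by linarith) (by rw [hVα, hWα])
        (by rw [huα, hvα]) β' ⟨by linarith, le_rfl⟩
      have s2 := (S.mono (c := β') (by linarith) le_rfl).strict_left hc hh hVβ huβ
        (fun x hx => hr x ⟨hcβ'.trans hx.1, hx.2.trans_le hβR⟩) β' ⟨le_rfl, hb⟩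
      linarith [s2.1]
  subst hβ
  exact ⟨rfl, rfl, fun x hx => (S.eq_of_eq_left hc hh T (by linarith) (by rw [hVα, hWα])
        (by rw [huα, hvα]) x hx).symm⟩

end Sys

/-! ### From the differential equation to the system -/

/-- The integrating factor `p = exp (∫ 2b/σ²)`, the reciprocal of the scale density. -/
def pFac (b σ : ℝ → ℝ) : ℝ → ℝ := expInt (fun x => 2 * (b x / (σ x) ^ 2)) 0

/-- Coefficient `k = 1/p` of `V' = k u`, where `u = p V'`. -/
def kCoef (b σ : ℝ → ℝ) (x : ℝ) : ℝ := (pFac b σ x)⁻¹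

/-- Coefficient `r = 2λp/σ²` of `u' = r V + h`. -/
def rCoef (b σ : ℝ → ℝ) (lam x : ℝ) : ℝ := 2 * lam * (1 / (σ x) ^ 2 * pFac b σ x)

/-- Forcing term `h = -2fp/σ²` of `u' = r V + h`; its sign is opposite to that of `f`. -/
def hForce (b σ f : ℝ → ℝ) (x : ℝ) : ℝ := -2 * (f x / (σ x) ^ 2 * pFac b σ x)

lemma locInt_mul_continuous {w g : ℝ → ℝ} (hw : LocallyIntegrable w volume) (hg : Continuous g) :
    LocallyIntegrable (fun x => w x * g x) volume := by
  rw [← locallyIntegrableOn_univ] at hw ⊢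
  exact hw.mul_continuousOn hg.continuousOn isOpen_univ.isLocallyClosed

lemma pFac_locInt {b σ : ℝ → ℝ} (hES : ES b σ) :
    LocallyIntegrable (fun x => 2 * (b x / (σ x) ^ 2)) volume := by
  have := locInt_mul_continuous hES.2.2.2.2 (continuous_const (y := (2 : ℝ)))
  simpa only [mul_comm] using this

lemma pFac_continuous {b σ : ℝ → ℝ} (hES : ES b σ) : Continuous (pFac b σ) :=
  expInt_continuous (pFac_locInt hES) 0

lemma pFac_pos (b σ : ℝ → ℝ) (x : ℝ) : 0 < pFac b σ x := expInt_pos _ _ _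

lemma coef_of_ES {b σ : ℝ → ℝ} {lam : ℝ} (hlam : 0 ≤ lam) (hES : ES b σ) :
    Coef (kCoef b σ) (rCoef b σ lam) where
  cont := (pFac_continuous hES).inv₀ fun x => (pFac_pos b σ x).ne'
  pos x := inv_pos.mpr (pFac_pos b σ x)
  locInt := by
    have := locInt_mul_continuous
      (locInt_mul_continuous hES.2.2.2.1 (pFac_continuous hES))
      (continuous_const (y := 2 * lam))
    exact this.congr (ae_of_all _ fun x => by simp only [rCoef]; ring)
  nonneg x := by
    have := pFac_pos b σ x
    unfold rCoef
    positivity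

lemma hForce_locInt {b σ f : ℝ → ℝ} (hES : ES b σ)
    (hf : LocallyIntegrable (fun x => f x / (σ x) ^ 2) volume) :
    LocallyIntegrable (hForce b σ f) volume := by
  have := locInt_mul_continuous (locInt_mul_continuous hf (pFac_continuous hES))
    (continuous_const (y := (-2 : ℝ)))
  exact this.congr (ae_of_all _ fun x => by simp only [hForce]; ring)

lemma hForce_eq {b σ f : ℝ → ℝ} (hES : ES b σ) (x : ℝ) :
    ∃ c > 0, hForce b σ f x = c * -f x := by
  have h1 := pFac_pos b σ x
  have h2 := hES.2.2.1 x
  exact ⟨2 * pFac b σ x / (σ x) ^ 2, by positivity, by unfold hForce; ring⟩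

/-- A solution of `(σ²/2) V'' + b V' - λ V = -f` with absolutely continuous `V'` solves the
first-order system with flux `u = p V'`. -/
lemma sys_of_ode {b σ f V V' : ℝ → ℝ} {lam x1 x2 : ℝ} (hES : ES b σ)
    (hd : ∀ x ∈ Icc x1 x2, HasDerivWithinAt V (V' x) (Icc x1 x2) x)
    (hV' : ContinuousOn V' (Icc x1 x2)) (hac : AbsCont V' x1 x2)
    (hode : ∀ᵐ x, x ∈ Ioo x1 x2 → ∃ d, HasDerivAt V' d x ∧
      (σ x) ^ 2 / 2 * d + b x * V' x - lam * V x = -f x) :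
    Sys (kCoef b σ) (rCoef b σ lam) (hForce b σ f) V (fun x => pFac b σ x * V' x) x1 x2 where
  contV x hx := (hd x hx).continuousWithinAt
  contU := (pFac_continuous hES).continuousOn.mul hV'
  intV x hx y hy := by
    have e : (fun t => kCoef b σ t * (pFac b σ t * V' t)) = V' := by
      funext t
      rw [kCoef, inv_mul_cancel_left₀ (pFac_pos b σ t).ne']
    rw [e]
    have hs := uIcc_subset_Icc hx hy
    refine (intervalIntegral.integral_eq_sub_of_hasDeriv_right (f := V)
      (fun t ht => ((hd t (hs ht)).continuousWithinAt).mono hs) ?_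
      ((hV'.mono hs).intervalIntegrable)).symm
    intro t ht
    have h1 : x1 < t := (le_min hx.1 hy.1).trans_lt ht.1
    have h2 : t < x2 := ht.2.trans_le (max_le hx.2 hy.2)
    exact ((hd t ⟨h1.le, h2.le⟩).hasDerivAt (Icc_mem_nhds h1 h2)).hasDerivWithinAt
  intU x hx y hy := by
    have hs := uIcc_subset_Icc hx hy
    have hA := ((expInt_ac (pFac_locInt hES) 0 x1 x2).fun_mul (hac.toMathlib (hx.1.trans hx.2))).mono
      (c := x) (d := y) (by rwa [uIcc_of_le (hx.1.trans hx.2)])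
    have h0 := hA.integral_deriv_eq_sub
    change _ = pFac b σ y * V' y - pFac b σ x * V' x at h0
    rw [← h0]
    refine intervalIntegral.integral_congr_ae ?_
    have hne : ∀ᵐ t : ℝ, t ≠ x2 := by simp [ae_iff, measure_singleton]
    filter_upwards [hode, hne, expInt_ae_hasDerivAt (pFac_locInt hES) 0] with t h1 h2 h3 ht
    have ht1 : x1 < t := (le_min hx.1 hy.1).trans_lt ht.1
    have ht2 : t < x2 := lt_of_le_of_ne (ht.2.trans (max_le hx.2 hy.2)) h2
    obtain ⟨d, hd1, hd2⟩ := h1 ⟨ht1, ht2⟩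
    rw [(h3.fun_mul hd1).deriv]
    change _ * pFac b σ t * V' t + pFac b σ t * d = _
    have hσ := hES.2.2.1 t
    have hdd : d = (2 * lam * V t - 2 * f t - 2 * b t * V' t) / (σ t) ^ 2 := by
      field_simp
      linarith
    rw [hdd]
    unfold rCoef hForce
    field_simp
    ring

/-- Both components of a solution of the free boundary problem, as solutions of the first-order
system with zero data at the four boundary points. -/
lemma SolFBP1821.systems {b σ f V : ℝ → ℝ} {lam x1 x2 x3 x4 : ℝ} (hES : ES b σ)
    (hsol : SolFBP1821 b σ f lam V x1 x2 x3 x4) :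
    ∃ u, Sys (kCoef b σ) (rCoef b σ lam) (hForce b σ f) V u x1 x2 ∧
      Sys (kCoef b σ) (rCoef b σ lam) (hForce b σ f) V u x3 x4 ∧
      V x1 = 0 ∧ V x2 = 0 ∧ V x3 = 0 ∧ V x4 = 0 ∧ u x1 = 0 ∧ u x2 = 0 ∧ u x3 = 0 ∧ u x4 = 0 := by
  obtain ⟨h12, h23, h34, hV0, V', hd1, hd2, hc1, hc2, z1, z2, z3, z4, ac1, ac2, ode⟩ := hsol
  refine ⟨fun x => pFac b σ x * V' x, sys_of_ode hES hd1 hc1 ac1 ?_,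
    sys_of_ode hES hd2 hc2 ac2 ?_, hV0 _ ?_, hV0 _ ?_, hV0 _ ?_, hV0 _ ?_,
    by simp [z1], by simp [z2], by simp [z3], by simp [z4]⟩
  · filter_upwards [ode] with x hx h using hx (Or.inl h)
  · filter_upwards [ode] with x hx h using hx (Or.inr h)
  all_goals
    rintro (h | h) <;> linarith [h.1, h.2]

/-! ### Location of the free boundaries -/

/-- If `f` changes sign at most once on `(x, y)`, in either direction, then the only solution with
zero data at both ends is zero. The sign change `c` need not lie in `[x, y]`. -/
lemma Sys.eq_zero_of_one_sign_change {b σ f V u : ℝ → ℝ} {lam x y : ℝ} (hlam : 0 ≤ lam)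
    (hES : ES b σ) (hf : LocallyIntegrable (fun x => f x / (σ x) ^ 2) volume)
    (S : Sys (kCoef b σ) (rCoef b σ lam) (hForce b σ f) V u x y) (hxy : x ≤ y)
    (hVx : V x = 0) (hux : u x = 0) (hVy : V y = 0) (huy : u y = 0) (c : ℝ)
    (hsign : ((∀ t ∈ Ioo x y, t < c → f t ≤ 0) ∧ (∀ t ∈ Ioo x y, c < t → 0 ≤ f t)) ∨
      ((∀ t ∈ Ioo x y, t < c → 0 ≤ f t) ∧ (∀ t ∈ Ioo x y, c < t → f t ≤ 0))) :
    ∀ t ∈ Icc x y, V t = 0 := by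
  have hc := coef_of_ES hlam hES
  have hh := hForce_locInt hES hf
  have hF1 : ∀ t, f t ≤ 0 → 0 ≤ hForce b σ f t := by
    intro t ht
    obtain ⟨c, hc0, e⟩ := hForce_eq (f := f) hES t
    rw [e]
    exact mul_nonneg hc0.le (by linarith)
  have hF2 : ∀ t, 0 ≤ f t → hForce b σ f t ≤ 0 := by
    intro t ht
    obtain ⟨c, hc0, e⟩ := hForce_eq (f := f) hES t
    rw [e]
    exact mul_nonpos_of_nonneg_of_nonpos hc0.le (by linarith)
  have hcm : max x (min c y) ∈ Icc x y := ⟨le_max_left _ _, max_le hxy (min_le_right _ _)⟩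
  have hlt : ∀ t ∈ Ioo x (max x (min c y)), t ∈ Ioo x y ∧ t < c := by
    intro t ht
    rcases lt_max_iff.mp ht.2 with h | h
    · exact absurd ht.1 h.not_gt
    · exact ⟨⟨ht.1, (lt_min_iff.mp h).2⟩, (lt_min_iff.mp h).1⟩
  have hgt : ∀ t ∈ Ioo (max x (min c y)) y, t ∈ Ioo x y ∧ c < t := by
    intro t ht
    obtain ⟨h1, h2⟩ := max_lt_iff.mp ht.1
    rcases min_lt_iff.mp h2 with h | h
    · exact ⟨⟨h1, ht.2⟩, h⟩
    · exact absurd ht.2 h.not_gt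
  rcases hsign with ⟨hl, hr⟩ | ⟨hl, hr⟩
  · exact S.vanish hc hh hVx hux hVy huy hcm
      (fun t ht => hF1 t (hl t (hlt t ht).1 (hlt t ht).2))
      (fun t ht => hF2 t (hr t (hgt t ht).1 (hgt t ht).2))
  · have := S.neg.vanish hc hh.neg (by simp [hVx]) (by simp [hux]) (by simp [hVy]) (by simp [huy])
      hcm (fun t ht => neg_nonneg.mpr (hF2 t (hl t (hlt t ht).1 (hlt t ht).2)))
      (fun t ht => neg_nonpos.mpr (hF1 t (hr t (hgt t ht).1 (hgt t ht).2)))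
    intro t ht
    exact neg_eq_zero.mp (this t ht)

lemma Shape4.nonneg {f : ℝ → ℝ} {a1l a1r a2l a2r a3l a3r a4l a4r : ℝ}
    (hf : Shape4 f a1l a1r a2l a2r a3l a3r a4l a4r) {x : ℝ}
    (hx : x ∈ Icc a1l a2r ∪ Icc a3l a4r) : 0 ≤ f x := by
  obtain ⟨h1, h2, h3, h4, h5, h6, h7, hz, hp, -⟩ := hf
  rcases hx with hx | hx
  · rcases le_or_gt x a1r with h | h
    · exact (hz x (Or.inl (Or.inl (Or.inl ⟨hx.1, h⟩)))).ge
    rcases le_or_gt a2l x with h' | h'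
    · exact (hz x (Or.inl (Or.inl (Or.inr ⟨h', hx.2⟩)))).ge
    · exact (hp x (Or.inl ⟨h, h'⟩)).le
  · rcases le_or_gt x a3r with h | h
    · exact (hz x (Or.inl (Or.inr ⟨hx.1, h⟩))).ge
    rcases le_or_gt a4l x with h' | h'
    · exact (hz x (Or.inr ⟨h', hx.2⟩)).ge
    · exact (hp x (Or.inr ⟨h, h'⟩)).le

lemma Shape4.nonpos {f : ℝ → ℝ} {a1l a1r a2l a2r a3l a3r a4l a4r : ℝ}
    (hf : Shape4 f a1l a1r a2l a2r a3l a3r a4l a4r) {x : ℝ}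
    (hx : x < a1l ∨ x ∈ Ioo a2r a3l ∨ a4r < x) : f x ≤ 0 := by
  refine (hf.2.2.2.2.2.2.2.2.2 x ?_).le
  rcases hx with h | h | h
  · exact Or.inl (Or.inl h)
  · exact Or.inl (Or.inr h)
  · exact Or.inr h

/-- Along the real line `f` has the sign pattern `- + - + -`. By
`Sys.eq_zero_of_one_sign_change`, each of the two intervals meets at least three consecutive sign
regions; as the intervals are ordered, they meet exactly the first three and the last three. -/
lemma location {b σ f V : ℝ → ℝ} {lam x1 x2 x3 x4 : ℝ} (hlam : 0 ≤ lam) (hES : ES b σ)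
    {a1l a1r a2l a2r a3l a3r a4l a4r : ℝ}
    (hf : Shape4 f a1l a1r a2l a2r a3l a3r a4l a4r)
    (hloc : LocallyIntegrable (fun x => f x / (σ x) ^ 2) volume)
    (hsol : SolFBP1821 b σ f lam V x1 x2 x3 x4)
    (hnt1 : ∃ x ∈ Ioo x1 x2, V x ≠ 0) (hnt2 : ∃ x ∈ Ioo x3 x4, V x ≠ 0) :
    x1 < a1l ∧ x2 ∈ Ioo a2r a3l ∧ x3 ∈ Ioo a2r a3l ∧ a4r < x4 := by
  obtain ⟨u, S1, S2, V1, V2, V3, V4, u1, u2, u3, u4⟩ := hsol.systems hES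
  obtain ⟨h12, h23, h34, -⟩ := hsol
  obtain ⟨z1, hz1, hz1'⟩ := hnt1
  obtain ⟨z2, hz2, hz2'⟩ := hnt2
  have n1 := fun c hs => hz1' (S1.eq_zero_of_one_sign_change hlam hES hloc h12.le V1 u1 V2 u2 c hs
    z1 (Ioo_subset_Icc_self hz1))
  have n2 := fun c hs => hz2' (S2.eq_zero_of_one_sign_change hlam hES hloc h34.le V3 u3 V4 u4 c hs
    z2 (Ioo_subset_Icc_self hz2))
  have hx2 : a2r < x2 := by
    by_contra hcon
    exact n1 a1l (Or.inl ⟨fun t _ h => hf.nonpos (Or.inl h),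
      fun t ht h => hf.nonneg (Or.inl ⟨h.le, by linarith [ht.2]⟩)⟩)
  have hx3 : x3 < a3l := by
    by_contra hcon
    exact n2 a4r (Or.inr ⟨fun t ht h => hf.nonneg (Or.inr ⟨by linarith [ht.1], h.le⟩),
      fun t _ h => hf.nonpos (Or.inr (Or.inr h))⟩)
  refine ⟨?_, ⟨hx2, by linarith⟩, ⟨by linarith, hx3⟩, ?_⟩
  · by_contra hcon
    exact n1 a2r (Or.inr ⟨fun t ht h => hf.nonneg (Or.inl ⟨by linarith [ht.1], h.le⟩),
      fun t ht h => hf.nonpos (Or.inr (Or.inl ⟨h, by linarith [ht.2]⟩))⟩)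
  · by_contra hcon
    exact n2 a3l (Or.inl ⟨fun t ht h => hf.nonpos (Or.inr (Or.inl ⟨by linarith [ht.1], h⟩)),
      fun t ht h => hf.nonneg (Or.inr ⟨h.le, by linarith [ht.2]⟩)⟩)

/-- **Theorem 2.3 (uniqueness and location of the boundaries).** -/
theorem thm23
    (b σ f : ℝ → ℝ) (lam : ℝ) (hlam : 0 ≤ lam)
    (hES : ES b σ) (hmf : Measurable f)
    (a1l a1r a2l a2r a3l a3r a4l a4r : ℝ)
    (hf : Shape4 f a1l a1r a2l a2r a3l a3r a4l a4r)
    (h23 : Cond23' f σ a1l a1r a2l a2r a3l a3r a4l a4r)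
    (V : ℝ → ℝ) (x1 x2 x3 x4 : ℝ)
    (hsol : SolFBP1821 b σ f lam V x1 x2 x3 x4)
    (hnt1 : ∃ x ∈ Set.Ioo x1 x2, V x ≠ 0) (hnt2 : ∃ x ∈ Set.Ioo x3 x4, V x ≠ 0) :
    (∀ (W : ℝ → ℝ) (y1 y2 y3 y4 : ℝ), SolFBP1821 b σ f lam W y1 y2 y3 y4 →
      (∃ x ∈ Set.Ioo y1 y2, W x ≠ 0) → (∃ x ∈ Set.Ioo y3 y4, W x ≠ 0) →
      y1 = x1 ∧ y2 = x2 ∧ y3 = x3 ∧ y4 = x4 ∧ ∀ x, W x = V x) ∧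
    x1 < a1l ∧ x2 ∈ Set.Ioo a2r a3l ∧ x3 ∈ Set.Ioo a2r a3l ∧ a4r < x4 := by
  have hc := coef_of_ES hlam hES
  have hh := hForce_locInt hES h23.1
  obtain ⟨lV1, lV2, lV3, lV4⟩ := location hlam hES hf h23.1 hsol hnt1 hnt2
  have hneg : ∀ x, f x < 0 → 0 < hForce b σ f x := by
    intro x hx
    obtain ⟨c, hc0, e⟩ := hForce_eq (f := f) hES x
    rw [e]
    exact mul_pos hc0 (by linarith)
  have h1 : a1l ≤ a2r := by obtain ⟨_, _, _, _⟩ := hf; linarith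
  have h2 : a3l ≤ a4r := by obtain ⟨_, _, _, _, _, _, _, _⟩ := hf; linarith
  have hfneg := hf.2.2.2.2.2.2.2.2.2
  refine ⟨?_, lV1, lV2, lV3, lV4⟩
  intro W y1 y2 y3 y4 hsolW hntW1 hntW2
  obtain ⟨lW1, lW2, lW3, lW4⟩ := location hlam hES hf h23.1 hsolW hntW1 hntW2
  obtain ⟨u, S1, S2, V1, V2, V3, V4, u1, u2, u3, u4⟩ := hsol.systems hES
  obtain ⟨v, T1, T2, W1, W2, W3, W4, v1, v2, v3, v4⟩ := hsolW.systems hES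
  obtain ⟨e1, e2, E1⟩ := S1.unique hc hh T1 V1 u1 V2 u2 W1 v1 W2 v2
    (min_le_left x1 y1) (min_le_right x1 y1) lV1 lW1 h1 lV2.1 lW2.1 lV2.2.le lW2.2.le
    (fun x hx => hneg x (hfneg x (Or.inl (Or.inl hx.2))))
    (fun x hx => hneg x (hfneg x (Or.inl (Or.inr hx))))
  obtain ⟨e3, e4, E2⟩ := S2.unique hc hh T2 V3 u3 V4 u4 W3 v3 W4 v4
    lV3.1.le lW3.1.le lV3.2 lW3.2 h2 lV4 lW4 (le_max_left x4 y4) (le_max_right x4 y4)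
    (fun x hx => hneg x (hfneg x (Or.inl (Or.inr hx))))
    (fun x hx => hneg x (hfneg x (Or.inr hx.1)))
  refine ⟨e1, e2, e3, e4, fun x => ?_⟩
  subst e1 e2 e3 e4
  by_cases hx : x ∈ Set.Ioo y1 y2 ∪ Set.Ioo y3 y4
  · rcases hx with hx | hx
    · exact E1 x (Ioo_subset_Icc_self hx)
    · exact E2 x (Ioo_subset_Icc_self hx)
  · rw [hsol.2.2.2.1 x hx, hsolW.2.2.2.1 x hx]
end
end

section
/- Assume b ≡ 0 and λ = 0, that h(∞) and h(−∞) are finite with h(∞) = h(−∞), and set m = (h(∞) + h(−∞))/2. Assume K⁺ = ∞ and K⁻ < ∞. Then for every sequence b_n ↑ ∞ with b_1 ≥ x2r there exist a sequence c_n ↓ m with m < c_n < h(x1r) for every n, and a sequence a_n → −∞ with a_n < α_{c_n} for every n, such that ∫_{a_n}^{b_n} H(y, c_n) dy = 0 and, defining U_n(x) = ∫_{a_n}^x H(y, c_n) dy for x ∈ (a_n, b_n) and U_n(x) = 0 otherwise, one has sup_{x ∈ ℝ} U_n(x) = U_n(γ_{c_n}) ≤ K⁻ for every n. -/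
/-!
The function `h` rises from the value `m` at `-∞` to its maximum on `[x1l, x1r]`, drops to its
minimum on `[x2l, x2r]`, and rises back to `m` at `+∞`. So `h > m` on `(-∞, x1r]` and `h < m` on
`[x2l, ∞)`, and for `m < c < h x1r` the sign of `h - c` is `-` on `(-∞, α)`, `+` on `(α, γ)` and `-`
on `(γ, ∞)`.

For a fixed right end point `b`, every `c > m` close enough to `m` works (`Hump.eventually_good`):

* `∫_γ^b (c - h)` exceeds `∫_γ^b (m - h)` by `(c - m) (b - γ)` only, and for small `c - m` this is
  absorbed by `∫_b^{b+1} (m - h) > 0`; hence `∫_γ^b (c - h) ≤ K⁻`.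
* `∫_α^γ (h - c)` exceeds `K⁻` when `c` is close to `m`, because `K⁺ = ∞`. So `∫_a^b (h - c)` is
  positive at `a = α`, while it tends to `-∞` as `a → -∞`; the intermediate value theorem gives `a`.
* `x ↦ ∫_a^x (h - c)` falls, rises, falls on the three pieces, so its maximum is at `γ`
  (the starting value `0` at `a` is not larger, since the value at `γ` is `∫_γ^b (c - h) ≥ 0`).

The sequence `c_n` is then a subsequence of an arbitrary strictly decreasing sequence tending to `m`,
and `a_n < α_{c_n} → -∞` holds because `h > m` on `(-∞, x1l]`.
-/

open MeasureTheory Set Filter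

noncomputable section

/-- shape of `f` as in Figure 1 -/
def Shape (f : ℝ → ℝ) (x1l x1r x2l x2r : ℝ) : Prop :=
  x1l ≤ x1r ∧ x1r < x2l ∧ x2l ≤ x2r ∧
  (∀ x ∈ Set.Ioo x1r x2l, 0 < f x) ∧
  (∀ x ∈ Set.Icc x1l x1r ∪ Set.Icc x2l x2r, f x = 0) ∧
  (∀ x ∈ Set.Iio x1l ∪ Set.Ioi x2r, f x < 0)

/-- condition (2.3) -/
def Cond23 (f σ : ℝ → ℝ) (x1l x1r x2l x2r : ℝ) : Prop :=
  LocallyIntegrable (fun x => f x / (σ x) ^ 2) volume ∧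
  ∀ x ∉ Set.Icc x1l x1r ∪ Set.Icc x2l x2r, LocBddAt (fun y => 1 / f y) x

/-! ### Hump-shaped functions and their level sets -/

lemma integral_nonpos_on {F : ℝ → ℝ} {x y : ℝ} (hxy : x ≤ y) (hF : ∀ t ∈ Icc x y, F t ≤ 0) :
    ∫ t in x..y, F t ≤ 0 := by
  have := intervalIntegral.integral_nonneg (μ := volume) (f := fun t => -F t) hxy
    fun t ht => neg_nonneg.2 (hF t ht)
  rw [intervalIntegral.integral_neg] at this
  linarith

/-- The features of `h` used in the construction: it is continuous, tends to `m` at `-∞`, increases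
on `(-∞, p]`, decreases on `[p, q]`, lies above `m` on `(-∞, p]` and below `m` on `[q, ∞)`. -/
structure Hump (h : ℝ → ℝ) (m p q : ℝ) : Prop where
  cont : Continuous h
  lt : p < q
  lim : Tendsto h atBot (nhds m)
  mono : MonotoneOn h (Iic p)
  anti : AntitoneOn h (Icc p q)
  above : ∀ x ≤ p, m < h x
  below : ∀ x, q ≤ x → h x < m

namespace Hump

variable {h : ℝ → ℝ} {m p q : ℝ}

lemma ii (H : Hump h m p q) (c x y : ℝ) : IntervalIntegrable (fun y => h y - c) volume x y :=
  (H.cont.sub continuous_const).intervalIntegrable _ _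

lemma exists_alpha (H : Hump h m p q) {c : ℝ} (hc : m < c) (hc' : c < h p) :
    ∃ α < p, h α = c := by
  obtain ⟨M, hM⟩ := (eventually_atBot.1 (H.lim.eventually (gt_mem_nhds hc)))
  have h1 : h (min M p) < c := hM _ (min_le_left _ _)
  obtain ⟨α, ⟨_, h2⟩, h3⟩ := intermediate_value_Icc (min_le_right M p) H.cont.continuousOn
    ⟨h1.le, hc'.le⟩
  refine ⟨α, lt_of_le_of_ne h2 ?_, h3⟩
  rintro rfl
  exact hc'.ne' h3

lemma exists_gamma (H : Hump h m p q) {c : ℝ} (hc : m < c) (hc' : c < h p) :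
    ∃ γ ∈ Ioo p q, h γ = c := by
  obtain ⟨γ, h2, h3⟩ := intermediate_value_Ioo' H.lt.le H.cont.continuousOn
    ⟨(H.below q le_rfl).trans hc, hc'⟩
  exact ⟨γ, h2, h3⟩

lemma ge_mid (H : Hump h m p q) {c α γ x : ℝ} (hα : α < p) (hαc : h α = c)
    (hγ : γ ∈ Ioo p q) (hγc : h γ = c) (hx : x ∈ Icc α γ) : c ≤ h x := by
  rcases le_total x p with hp | hp
  · exact hαc ▸ H.mono hα.le hp hx.1
  · exact hγc ▸ H.anti ⟨hp, hx.2.trans hγ.2.le⟩ ⟨hγ.1.le, hγ.2.le⟩ hx.2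

lemma le_right (H : Hump h m p q) {c γ x : ℝ} (hc : m < c)
    (hγ : γ ∈ Ioo p q) (hγc : h γ = c) (hx : γ ≤ x) : h x ≤ c := by
  rcases le_total x q with hp | hp
  · exact hγc ▸ H.anti ⟨hγ.1.le, hγ.2.le⟩ ⟨hγ.1.le.trans hx, hp⟩ hx
  · exact (H.below x hp).le.trans hc.le

/-! ### Integral estimates and the choice of the left end point -/

/-- As the positive part of `h - m` has infinite integral and all of its mass beyond a bounded
interval sits on the left, its integrals over `[A, p]` are unbounded. -/
lemma exists_large (H : Hump h m p q) (hK : (∫⁻ y, ENNReal.ofReal (h y - m)) = ⊤) (C : ℝ) :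
    ∃ A < p, C < ∫ y in A..p, (h y - m) := by
  by_contra! hcon
  have hi : IntegrableOn (fun y => h y - m) (Iic p) := by
    refine integrableOn_Iic_of_intervalIntegral_norm_bounded (μ := volume) (l := atBot)
      (a := id) C p (fun i => ?_) tendsto_id ?_
    · exact (H.ii m i p).1
    · filter_upwards [eventually_lt_atBot p] with A hA
      refine le_trans (le_of_eq ?_) (hcon A hA)
      refine intervalIntegral.integral_congr fun y hy => ?_
      rw [id, uIcc_of_le hA.le] at hy
      exact Real.norm_of_nonneg (sub_nonneg.2 (H.above y hy.2).le)
  have hi2 : IntegrableOn (fun y => max (h y - m) 0) (Iic q) := by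
    rw [← Iic_union_Ioc_eq_Iic H.lt.le]
    exact (hi.union (H.ii m p q).1).pos_part
  have hi3 : IntegrableOn (fun y => max (h y - m) 0) (Ioi q) := by
    refine (integrableOn_zero (μ := volume)).congr_fun (fun y hy => ?_) measurableSet_Ioi
    exact (max_eq_right (sub_nonpos.2 (H.below y (le_of_lt hy)).le)).symm
  have hi4 : Integrable (fun y => max (h y - m) 0) := by
    rw [← integrableOn_univ, ← Iic_union_Ioi (a := q)]
    exact hi2.union hi3
  have := hi4.lintegral_lt_top
  simp only [ENNReal.ofReal_max, ENNReal.ofReal_zero, zero_le, sup_of_le_left, hK] at this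
  exact lt_irrefl _ this

lemma integrable_neg (H : Hump h m p q) (hK : (∫⁻ y, ENNReal.ofReal (m - h y)) < ⊤) :
    Integrable (fun y => max (m - h y) 0) := by
  refine ⟨(by have := H.cont; fun_prop : Continuous _).aestronglyMeasurable, ?_⟩
  have h0 : 0 ≤ᵐ[volume] fun y => max (m - h y) 0 := ae_of_all _ fun _ => le_max_right _ _
  rw [hasFiniteIntegral_iff_ofReal h0]
  simpa only [ENNReal.ofReal_max, ENNReal.ofReal_zero, zero_le, sup_of_le_left] using hK

lemma exists_nonpos (H : Hump h m p q) {c : ℝ} (hc : m < c) (α b : ℝ) :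
    ∃ a ≤ α, ∫ y in a..b, (h y - c) ≤ 0 := by
  have hd : m < (m + c) / 2 := by linarith
  obtain ⟨M, hM⟩ := (eventually_atBot.1 (H.lim.eventually (gt_mem_nhds hd)))
  set N := min M α
  set G := ∫ y in N..b, (h y - c)
  have hG : 0 ≤ |G| / ((c - m) / 2) := by
    have : 0 < c - m := by linarith
    positivity
  refine ⟨N - |G| / ((c - m) / 2), by linarith [min_le_right M α], ?_⟩
  rw [← intervalIntegral.integral_add_adjacent_intervals (H.ii c _ N) (H.ii c N b)]
  have h1 : ∫ y in (N - |G| / ((c - m) / 2))..N, (h y - c) ≤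
      ∫ y in (N - |G| / ((c - m) / 2))..N, (-((c - m) / 2)) := by
    refine intervalIntegral.integral_mono_on (by linarith) (H.ii c _ _) (by simp) fun x hx => ?_
    linarith [hM x (hx.2.trans (min_le_left _ _))]
  rw [intervalIntegral.integral_const, smul_eq_mul] at h1
  have h2 : (N - (N - |G| / ((c - m) / 2))) * (-((c - m) / 2)) = -|G| := by
    have : c - m ≠ 0 := by linarith
    field_simp
    ring
  linarith [le_abs_self G]

/-- For a given right end point `b`, all levels `c` slightly above `m` admit a left end point `a`
with `∫_a^b (h - c) = 0`, and the primitive of `h - c` from `a` is maximal at `γ_c`, with value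
at most `K⁻`. -/
lemma eventually_good (H : Hump h m p q) (hKp : (∫⁻ y, ENNReal.ofReal (h y - m)) = ⊤)
    (hKm : (∫⁻ y, ENNReal.ofReal (m - h y)) < ⊤) {b : ℝ} (hb : q ≤ b) :
    ∀ᶠ c in nhdsWithin m (Ioi m), m < c ∧ c < h p ∧ ∃ a α γ, a < α ∧ α < p ∧ h α = c ∧
      γ ∈ Ioo p q ∧ h γ = c ∧ (∫ y in a..b, (h y - c)) = 0 ∧
      0 ≤ (∫ y in a..γ, (h y - c)) ∧
      (∀ x ∈ Ioo a b, (∫ y in a..x, (h y - c)) ≤ ∫ y in a..γ, (h y - c)) ∧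
      ENNReal.ofReal (∫ y in a..γ, (h y - c)) ≤ ∫⁻ y, ENNReal.ofReal (m - h y) := by
  have hneg := H.integrable_neg hKm
  set N := ∫ y, max (m - h y) 0 with hN
  have hNK : ENNReal.ofReal N = ∫⁻ y, ENNReal.ofReal (m - h y) := by
    rw [hN, ofReal_integral_eq_lintegral_ofReal hneg (ae_of_all _ fun _ => le_max_right _ _)]
    simp only [ENNReal.ofReal_max, ENNReal.ofReal_zero, zero_le, sup_of_le_left]
  obtain ⟨A, hAp, hA⟩ := H.exists_large hKp (N + 1)
  -- the reserve `∫_b^{b+1} (m - h)` pays for replacing `m` by `c` on `[γ, b]`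
  have hT : 0 < ∫ y in b..(b+1), max (m - h y) 0 := by
    refine intervalIntegral.intervalIntegral_pos_of_pos_on hneg.intervalIntegrable ?_ (by linarith)
    intro x hx
    exact lt_max_of_lt_left (sub_pos.2 (H.below x (hb.trans hx.1.le)))
  set T := ∫ y in b..(b+1), max (m - h y) 0
  have e1 : ∀ᶠ c in nhds m, c < h p := gt_mem_nhds (H.above p le_rfl)
  have e2 : ∀ᶠ c in nhds m, c < h A := gt_mem_nhds (H.above A hAp.le)
  have e3 : ∀ᶠ c in nhds m, (c - m) * (p - A) < 1 := by
    have : Tendsto (fun c => (c - m) * (p - A)) (nhds m) (nhds ((m - m) * (p - A))) :=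
      Continuous.tendsto (by fun_prop) m
    exact this.eventually (gt_mem_nhds (by simp))
  have e4 : ∀ᶠ c in nhds m, (c - m) * (b - p) < T := by
    have : Tendsto (fun c => (c - m) * (b - p)) (nhds m) (nhds ((m - m) * (b - p))) :=
      Continuous.tendsto (by fun_prop) m
    exact this.eventually (gt_mem_nhds (by simpa using hT))
  filter_upwards [nhdsWithin_le_nhds e1, nhdsWithin_le_nhds e2, nhdsWithin_le_nhds e3,
    nhdsWithin_le_nhds e4, self_mem_nhdsWithin] with c h1 h2 h3 h4 (h5 : m < c)
  refine ⟨h5, h1, ?_⟩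
  obtain ⟨α, hα, hαc⟩ := H.exists_alpha h5 h1
  obtain ⟨γ, hγ, hγc⟩ := H.exists_gamma h5 h1
  have hγb : γ ≤ b := hγ.2.le.trans hb
  have hαA : α < A := by
    by_contra! hle
    exact absurd (H.mono hAp.le hα.le hle) (by rw [hαc]; exact not_le.2 h2)
  -- the mass of `c - h` on `[γ, b]` is at most `K⁻`
  have hR : -∫ y in γ..b, (h y - c) ≤ N := by
    have i1 : -∫ y in γ..b, (h y - c) ≤ ∫ y in γ..b, ((c - m) + max (m - h y) 0) := by
      rw [← intervalIntegral.integral_neg]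
      refine intervalIntegral.integral_mono_on hγb (H.ii c _ _).neg
        (intervalIntegrable_const.add hneg.intervalIntegrable) fun x _ => ?_
      linarith [le_max_left (m - h x) 0]
    rw [intervalIntegral.integral_add intervalIntegrable_const hneg.intervalIntegrable,
      intervalIntegral.integral_const, smul_eq_mul] at i1
    have i2 : (∫ y in γ..b, max (m - h y) 0) + T ≤ N := by
      rw [intervalIntegral.integral_add_adjacent_intervals hneg.intervalIntegrable
        hneg.intervalIntegrable, intervalIntegral.integral_of_le (by linarith)]
      exact setIntegral_le_integral hneg (ae_of_all _ fun _ => le_max_right _ _)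
    have i3 : (b - γ) * (c - m) ≤ (c - m) * (b - p) := by
      rw [mul_comm]
      exact mul_le_mul_of_nonneg_left (by linarith [hγ.1]) (by linarith)
    linarith
  -- the mass of `h - c` on `[α, γ]` exceeds `K⁻`
  have hL : N < ∫ y in α..γ, (h y - c) := by
    have i1 : ∫ y in A..p, (h y - c) ≤ ∫ y in α..γ, (h y - c) := by
      refine intervalIntegral.integral_mono_interval hαA.le hAp.le hγ.1.le ?_ (H.ii c _ _)
      refine (ae_restrict_iff' measurableSet_Ioc).2 (ae_of_all _ fun x hx => ?_)
      exact sub_nonneg.2 (H.ge_mid hα hαc hγ hγc ⟨hx.1.le, hx.2⟩)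
    have i2 : ∫ y in A..p, (h y - c) = (∫ y in A..p, (h y - m)) - (c - m) * (p - A) := by
      have : ∀ y, h y - c = (h y - m) - (c - m) := fun y => by ring
      simp_rw [this]
      rw [intervalIntegral.integral_sub (H.ii m _ _) intervalIntegrable_const,
        intervalIntegral.integral_const, smul_eq_mul, mul_comm (p - A)]
    linarith
  obtain ⟨a₀, ha₀, hG₀⟩ := H.exists_nonpos h5 α b
  have hGα : 0 < ∫ y in α..b, (h y - c) := by
    rw [← intervalIntegral.integral_add_adjacent_intervals (H.ii c α γ) (H.ii c γ b)]
    linarith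
  have hGc : Continuous fun a => ∫ y in a..b, (h y - c) := by
    simp_rw [fun a => intervalIntegral.integral_symm (μ := volume) (f := fun y => h y - c) b a]
    exact (intervalIntegral.continuous_primitive (fun x y => H.ii c x y) b).neg
  obtain ⟨a, ha, hGa⟩ := intermediate_value_Icc ha₀ hGc.continuousOn ⟨hG₀, hGα.le⟩
  have haα : a < α := by
    refine lt_of_le_of_ne ha.2 ?_
    rintro rfl
    exact hGα.ne' hGa
  have hsplit : ∀ x y, (∫ t in a..x, (h t - c)) + ∫ t in x..y, (h t - c) = ∫ t in a..y, (h t - c) :=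
    fun x y => intervalIntegral.integral_add_adjacent_intervals (H.ii c a x) (H.ii c x y)
  have hright : ∀ x, γ ≤ x → ∫ y in γ..x, (h y - c) ≤ 0 := fun x hx =>
    integral_nonpos_on hx fun y hy =>
      sub_nonpos.2 (H.le_right h5 hγ hγc hy.1)
  have hUγ : (∫ y in a..γ, (h y - c)) = -∫ y in γ..b, (h y - c) := by
    have := hsplit γ b
    simp only at hGa
    linarith
  have hUpos : 0 ≤ ∫ y in a..γ, (h y - c) := by
    rw [hUγ]
    linarith [hright b hγb]
  refine ⟨a, α, γ, haα, hα, hαc, hγ, hγc, hGa, hUpos, fun x hx => ?_, ?_⟩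
  · rcases le_total x γ with hxγ | hxγ
    · rcases le_total x α with hxα | hxα
      · refine le_trans ?_ hUpos
        refine integral_nonpos_on hx.1.le fun y hy => sub_nonpos.2 ?_
        exact hαc ▸ H.mono ((hy.2.trans hxα).trans hα.le) hα.le (hy.2.trans hxα)
      · have : 0 ≤ ∫ y in x..γ, (h y - c) :=
          intervalIntegral.integral_nonneg hxγ fun y hy =>
            sub_nonneg.2 (H.ge_mid hα hαc hγ hγc ⟨hxα.trans hy.1, hy.2⟩)
        linarith [hsplit x γ]
    · linarith [hsplit γ x, hright x hxγ]
  · rw [← hNK, hUγ]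
    exact ENNReal.ofReal_le_ofReal hR

end Hump

/-! ### The shape of the primitive of `-2 f / σ²` -/

/-- The sign pattern of `f` makes `h` a hump; `h x1l = h x1r` because `f` vanishes on
`[x1l, x1r]`. -/
lemma Shape.hump {σ f : ℝ → ℝ} (hσ : ∀ x, σ x ≠ 0) {x1l x1r x2l x2r : ℝ}
    (hf : Shape f x1l x1r x2l x2r)
    (hfσ : LocallyIntegrable (fun x => f x / (σ x) ^ 2) volume)
    {h : ℝ → ℝ} (hh : ∀ x, h x = ∫ y in (0:ℝ)..x, -2 * f y / (σ y) ^ 2) {m : ℝ}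
    (hhp : Tendsto h atTop (nhds m)) (hhm : Tendsto h atBot (nhds m)) :
    Hump h m x1r x2l ∧ h x1l = h x1r := by
  obtain ⟨h12, h23, h34, fpos, fzero, fneg⟩ := hf
  have gi : ∀ x y, IntervalIntegrable (fun y => -2 * f y / (σ y) ^ 2) volume x y := by
    intro x y
    have := ((hfσ.integrableOn_isCompact (isCompact_uIcc (a := x) (b := y))).intervalIntegrable
      ).const_mul (-2)
    simpa only [mul_div_assoc] using this
  have hdiff : ∀ x y, h y = h x + ∫ t in x..y, -2 * f t / (σ t) ^ 2 := fun x y => by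
    rw [hh, hh, intervalIntegral.integral_add_adjacent_intervals (gi _ _) (gi _ _)]
  have hcont : Continuous h := by
    rw [funext hh]
    exact intervalIntegral.continuous_primitive gi 0
  have hsq : ∀ x, 0 < (σ x) ^ 2 := fun x => by have := hσ x; positivity
  have gpos : ∀ x, f x ≤ 0 → 0 ≤ -2 * f x / (σ x) ^ 2 := fun x hx =>
    div_nonneg (by linarith) (hsq x).le
  have incr : ∀ x y, x ≤ y → (∀ t ∈ Icc x y, f t ≤ 0) → h x ≤ h y := fun x y hxy ht => by
    rw [hdiff x y]
    linarith [intervalIntegral.integral_nonneg (μ := volume) hxy fun t hu => gpos t (ht t hu)]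
  have sincr : ∀ x y, x < y → (∀ t ∈ Ioo x y, f t < 0) → h x < h y := fun x y hxy ht => by
    rw [hdiff x y]
    linarith [intervalIntegral.intervalIntegral_pos_of_pos_on (gi x y)
      (fun t hu => div_pos (by linarith [ht t hu]) (hsq t)) hxy]
  have decr : ∀ x y, x ≤ y → (∀ t ∈ Icc x y, 0 ≤ f t) → h y ≤ h x := fun x y hxy ht => by
    rw [hdiff x y]
    linarith [integral_nonpos_on hxy fun t hu =>
      div_nonpos_of_nonpos_of_nonneg (by linarith [ht t hu] : -2 * f t ≤ 0) (hsq t).le]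
  have fle1 : ∀ t ≤ x1r, f t ≤ 0 := fun t ht => by
    rcases lt_or_ge t x1l with h1 | h1
    · exact (fneg t (Or.inl h1)).le
    · exact (fzero t (Or.inl ⟨h1, ht⟩)).le
  have fle2 : ∀ t, x2l ≤ t → f t ≤ 0 := fun t ht => by
    rcases le_or_gt t x2r with h1 | h1
    · exact (fzero t (Or.inr ⟨ht, h1⟩)).le
    · exact (fneg t (Or.inr h1)).le
  have fge : ∀ t ∈ Icc x1r x2l, 0 ≤ f t := fun t ht => by
    rcases eq_or_lt_of_le ht.1 with h1 | h1
    · exact (fzero t (Or.inl ⟨h1 ▸ h12, h1.ge⟩)).ge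
    rcases eq_or_lt_of_le ht.2 with h2 | h2
    · exact (fzero t (Or.inr ⟨h2.ge, h2 ▸ h34⟩)).ge
    exact (fpos t ⟨h1, h2⟩).le
  have hmono : MonotoneOn h (Iic x1r) := fun x _ y hy hxy =>
    incr x y hxy fun t ht => fle1 t (ht.2.trans hy)
  have hmono2 : MonotoneOn h (Ici x2l) := fun x hx y _ hxy =>
    incr x y hxy fun t ht => fle2 t (le_trans hx ht.1)
  refine ⟨⟨hcont, h23, hhm, hmono, ?_, ?_, ?_⟩, ?_⟩
  · exact fun x hx y hy hxy => decr x y hxy fun t ht => fge t ⟨hx.1.trans ht.1, ht.2.trans hy.2⟩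
  · intro x hx
    set z := min x x1l
    have hz : h z ≤ h x := hmono ((min_le_left _ _).trans hx) hx (min_le_left _ _)
    have hz1 : h (z - 1) < h z := sincr _ _ (by linarith) fun t ht =>
      fneg t (Or.inl (ht.2.trans_le (min_le_right _ _)))
    have hzx : z ≤ x1r := (min_le_left _ _).trans hx
    have hz2 : m ≤ h (z - 1) := le_of_tendsto hhm (by
      filter_upwards [eventually_le_atBot (z - 1)] with t ht
      exact hmono (mem_Iic.2 (by linarith)) (mem_Iic.2 (by linarith)) ht)
    linarith
  · intro x hx
    set z := max x x2r
    have hz : h x ≤ h z := hmono2 hx (le_trans hx (le_max_left _ _)) (le_max_left _ _)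
    have hz1 : h z < h (z + 1) := sincr _ _ (by linarith) fun t ht =>
      fneg t (Or.inr ((le_max_right _ _).trans_lt ht.1))
    have hzx : x2l ≤ z := le_trans hx (le_max_left _ _)
    have hz2 : h (z + 1) ≤ m := ge_of_tendsto hhp (by
      filter_upwards [eventually_ge_atTop (z + 1)] with t ht
      exact hmono2 (mem_Ici.2 (by linarith)) (mem_Ici.2 (by linarith)) ht)
    linarith
  · exact le_antisymm (hmono h12 (mem_Iic.2 le_rfl) h12)
      (decr _ _ h12 fun t ht => (fzero t (Or.inl ht)).ge)

/-! ### The sequences -/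

/-- The construction at the end of Section 3.3: case `b ≡ 0`, `λ = 0`, with
`h(∞) = h(−∞) = m` finite, `K⁺ = ∫ H⁺(y,m) dy = ∞` and `K⁻ = ∫ H⁻(y,m) dy < ∞`.
For every sequence `b_n ↑ ∞` with `b_1 ≥ x2r` there are sequences `c_n ↓ m` with
`m < c_n < h(x1r)` and `a_n → −∞` with `a_n < α_{c_n}` such that
`∫_{a_n}^{b_n} (h(y) − c_n) dy = 0` and, with
`U_n(x) = ∫_{a_n}^x (h(y) − c_n) dy` on `(a_n, b_n)` and `U_n = 0` otherwise,
`sup_x U_n(x) = U_n(γ_{c_n}) ≤ K⁻`. -/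
theorem counterexample_sequences
    (σ f : ℝ → ℝ) (hmσ : Measurable σ) (hmf : Measurable f) (hσ : ∀ x, σ x ≠ 0)
    (hσint : LocallyIntegrable (fun x => 1 / (σ x) ^ 2) volume)
    (x1l x1r x2l x2r : ℝ) (hf : Shape f x1l x1r x2l x2r)
    (hfσ : LocallyIntegrable (fun x => f x / (σ x) ^ 2) volume)
    (h : ℝ → ℝ) (hh : ∀ x, h x = ∫ y in (0:ℝ)..x, -2 * f y / (σ y) ^ 2)
    (m : ℝ)
    (hhp : Tendsto h atTop (nhds m)) (hhm : Tendsto h atBot (nhds m))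
    (hKplus : (∫⁻ y, ENNReal.ofReal (h y - m)) = ⊤)
    (hKminus : (∫⁻ y, ENNReal.ofReal (m - h y)) < ⊤)
    (bseq : ℕ → ℝ) (hbmono : Monotone bseq)
    (hbtop : Tendsto bseq atTop atTop) (hb0 : x2r ≤ bseq 0) :
    ∃ c : ℕ → ℝ, Antitone c ∧ Tendsto c atTop (nhds m) ∧
      (∀ n, m < c n ∧ c n < h x1r) ∧
      ∃ a : ℕ → ℝ, Tendsto a atTop atBot ∧
        ∀ n : ℕ,
          (∃ α : ℝ, α < x1l ∧ h α = c n ∧ a n < α) ∧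
          (∫ y in (a n)..(bseq n), (h y - c n)) = 0 ∧
          ∃ U : ℝ → ℝ,
            (∀ x ∈ Set.Ioo (a n) (bseq n), U x = ∫ y in (a n)..x, (h y - c n)) ∧
            (∀ x ∉ Set.Ioo (a n) (bseq n), U x = 0) ∧
            ∃ γ : ℝ, γ ∈ Set.Ioo x1r x2l ∧ h γ = c n ∧
              (∀ x, U x ≤ U γ) ∧
              ENNReal.ofReal (U γ) ≤ ∫⁻ y, ENNReal.ofReal (m - h y) := by
  classical
  obtain ⟨H, hflat⟩ := hf.hump hσ hfσ hh hhp hhm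
  obtain ⟨h12, h23, h34, -⟩ := hf
  obtain ⟨u, hu, hum, hul⟩ := exists_seq_strictAnti_tendsto m
  have hu' : Tendsto u atTop (nhdsWithin m (Ioi m)) :=
    tendsto_nhdsWithin_iff.2 ⟨hul, Eventually.of_forall hum⟩
  have hb : ∀ n, x2l ≤ bseq n := fun n => h34.trans (hb0.trans (hbmono (Nat.zero_le n)))
  obtain ⟨φ, hφ, hgood⟩ := extraction_forall_of_eventually
    fun n => hu'.eventually (H.eventually_good hKplus hKminus (hb n))
  choose hmc hcp a α γ haα hαp hαc hγ hγc hint hpos hmax hK using hgood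
  have hαl : ∀ n, α n < x1l := fun n => by
    by_contra! hle
    have := H.mono (mem_Iic.2 h12) (mem_Iic.2 (hαp n).le) hle
    rw [hflat, hαc] at this
    exact absurd (hcp n) (not_lt.2 this)
  have hcl : Tendsto (fun n => u (φ n)) atTop (nhds m) := hul.comp hφ.tendsto_atTop
  refine ⟨fun n => u (φ n), hu.antitone.comp_monotone hφ.monotone, hcl,
    fun n => ⟨hmc n, hcp n⟩, a, ?_, fun n => ?_⟩
  · rw [tendsto_atBot]
    intro M
    filter_upwards [hcl.eventually (gt_mem_nhds (H.above (min M x1r) (min_le_right _ _)))]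
      with n hn
    by_contra! hlt
    have := H.mono (mem_Iic.2 (min_le_right M x1r)) (mem_Iic.2 (hαp n).le)
      ((min_le_left _ _).trans (hlt.trans (haα n)).le)
    rw [hαc] at this
    exact absurd hn (not_lt.2 this)
  · have hγI : γ n ∈ Ioo (a n) (bseq n) :=
      ⟨((haα n).trans (hαp n)).trans (hγ n).1, (hγ n).2.trans_le (hb n)⟩
    refine ⟨⟨α n, hαl n, hαc n, haα n⟩, hint n,
      fun x => if x ∈ Ioo (a n) (bseq n) then ∫ y in (a n)..x, (h y - u (φ n)) else 0,
      fun x hx => if_pos hx, fun x hx => if_neg hx, γ n, hγ n, hγc n, fun x => ?_, ?_⟩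
    · simp only [if_pos hγI]
      split_ifs with hx
      · exact hmax n x hx
      · exact hpos n
    · simp only [if_pos hγI]
      exact hK n
end
end
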